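/- arXiv:1306.2701 — 3 statements merged into one kernel-verified Lean document; each statement's English description precedes it below -/
import Mathlib

section
/- Let α > 0, 0 ≤ W_L < W_H, and β, γ > 0 satisfy e^{(W_L−W_H)α} < β/γ < e^{(W_H−W_L)α}. Define ĉ(Q) = β e^{−α(Q−W_L)^+} + γ e^{−α(W_H−Q)^+} for Q ≥ 0, where (x)^+ = max(x,0), and define Q° = (log β − log γ)/(2α) + (W_L + W_H)/2. Then Q° ∈ (W_L, W_H), the restriction of ĉ to the interval [W_L, W_H] attains its minimum uniquely at Q°, and the minimum value is ĉ(Q°) = 2√(βγ) e^{−α(W_H−W_L)/2}. -/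
open Real

/-- The per-user per-stage queue cost
`ĉ(Q) = β e^{−α(Q−W_L)⁺} + γ e^{−α(W_H−Q)⁺}` restricted to `[W_L, W_H]` attains its
minimum uniquely at `Q° = (log β − log γ)/(2α) + (W_L + W_H)/2 ∈ (W_L, W_H)`, with
minimum value `2√(βγ) e^{−α(W_H−W_L)/2}`, provided
`e^{(W_L−W_H)α} < β/γ < e^{(W_H−W_L)α}`. -/
theorem queue_cost_min (α W_L W_H β γ : ℝ) (hα : 0 < α) (hWL : 0 ≤ W_L) (hW : W_L < W_H)
    (hβ : 0 < β) (hγ : 0 < γ)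
    (hlow : exp ((W_L - W_H) * α) < β / γ) (hhigh : β / γ < exp ((W_H - W_L) * α))
    (chat : ℝ → ℝ)
    (hchat : ∀ Q, chat Q = β * exp (-α * max (Q - W_L) 0) + γ * exp (-α * max (W_H - Q) 0))
    (Q0 : ℝ) (hQ0 : Q0 = (log β - log γ) / (2 * α) + (W_L + W_H) / 2) :
    Q0 ∈ Set.Ioo W_L W_H ∧
    (∀ Q ∈ Set.Icc W_L W_H, chat Q0 ≤ chat Q) ∧
    (∀ Q ∈ Set.Icc W_L W_H, chat Q = chat Q0 → Q = Q0) ∧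
    chat Q0 = 2 * Real.sqrt (β * γ) * exp (-α * (W_H - W_L) / 2) := by
  have hlin : 2 * α * Q0 = (log β - log γ) + α * (W_L + W_H) := by
    rw [hQ0]; field_simp
  have hq : 0 < β / γ := by positivity
  have h1 : (W_L - W_H) * α < log β - log γ := by
    rw [← log_div hβ.ne' hγ.ne']; exact (lt_log_iff_exp_lt hq).2 hlow
  have h2 : log β - log γ < (W_H - W_L) * α := by
    rw [← log_div hβ.ne' hγ.ne']; exact (log_lt_iff_lt_exp hq).2 hhigh
  have hmem : Q0 ∈ Set.Ioo W_L W_H := by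
    constructor
    · by_contra! h
      nlinarith
    · by_contra! h
      nlinarith
  set m := (log β + log γ) / 2 - α * (W_H - W_L) / 2 with hm
  have key : ∀ Q ∈ Set.Icc W_L W_H, chat Q = 2 * exp m * cosh (α * (Q - Q0)) := by
    intro Q hQ
    rw [hchat, max_eq_left (sub_nonneg.2 hQ.1), max_eq_left (sub_nonneg.2 hQ.2), cosh_eq]
    have e1 : β * exp (-α * (Q - W_L)) = exp m * exp (-(α * (Q - Q0))) := by
      nth_rewrite 1 [← exp_log hβ]
      rw [← exp_add, ← exp_add]
      congr 1
      linarith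
    have e2 : γ * exp (-α * (W_H - Q)) = exp m * exp (α * (Q - Q0)) := by
      nth_rewrite 1 [← exp_log hγ]
      rw [← exp_add, ← exp_add]
      congr 1
      linarith
    rw [e1, e2]; ring
  have hk0 : chat Q0 = 2 * exp m := by
    rw [key Q0 ⟨hmem.1.le, hmem.2.le⟩]; simp
  have hpos : 0 < 2 * exp m := by positivity
  refine ⟨hmem, ?_, ?_, ?_⟩
  · intro Q hQ
    rw [hk0, key Q hQ]
    exact le_mul_of_one_le_right hpos.le (one_le_cosh _)
  · intro Q hQ h
    by_contra hne
    have hlt : 1 < cosh (α * (Q - Q0)) :=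
      one_lt_cosh.2 (mul_ne_zero hα.ne' (sub_ne_zero.2 hne))
    rw [hk0, key Q hQ] at h
    nlinarith
  · have hs : Real.sqrt (β * γ) = exp ((log β + log γ) / 2) := by
      rw [exp_half, exp_add, exp_log hβ, exp_log hγ]
    rw [hk0, hs, mul_assoc, ← exp_add]
    congr 2
    rw [hm]; ring
end

section
/- Let E₁(x) = ∫_x^∞ e^{−t}/t dt for x > 0 (the exponential integral). Fix A > 0, c > 0, μ > 0 and C ∈ ℝ, define g(f) = C + (A · E₁(−c/f) − μ) · f − (A c) · ((f/c) e^{c/f} + E₁(−c/f)) for f < 0, and let λ̃ < 0 be the unique negative solution of A · E₁(−c/λ) = μ. Then g is strictly increasing on (−∞, λ̃], g(f) → −∞ as f → −∞, and consequently for every θ ≤ g(λ̃) there exists a unique f ∈ (−∞, λ̃] with g(f) = θ. -/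
open Real

/-- The exponential integral `E₁(x) = ∫_x^∞ e^{−t}/t dt`. -/
noncomputable def E1 (x : ℝ) : ℝ := ∫ t in Set.Ioi x, Real.exp (-t) / t

lemma E1_integrableOn {a : ℝ} (ha : 0 < a) :
    MeasureTheory.IntegrableOn (fun t : ℝ => Real.exp (-t) / t) (Set.Ioi a) := by
  have h1 : MeasureTheory.IntegrableOn (fun t : ℝ => Real.exp (-t) / a) (Set.Ioi a) :=
    (integrableOn_exp_neg_Ioi a).div_const a
  refine MeasureTheory.Integrable.mono' h1 ?_ ?_
  · refine ContinuousOn.aestronglyMeasurable ?_ measurableSet_Ioi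
    refine ContinuousOn.div (by fun_prop) (by fun_prop) ?_
    intro t ht
    exact (ha.trans ht).ne'
  · refine (MeasureTheory.ae_restrict_iff' measurableSet_Ioi).2 (Filter.Eventually.of_forall ?_)
    intro t ht
    have ht' : a < t := ht
    have : 0 < t := ha.trans ht'
    rw [Real.norm_of_nonneg (by positivity)]
    gcongr

lemma E1_hasDerivAt {x : ℝ} (hx : 0 < x) : HasDerivAt E1 (-(Real.exp (-x) / x)) x := by
  have ha : 0 < x / 2 := by linarith
  have hInt := E1_integrableOn ha
  have hcont : ∀ y : ℝ, 0 < y → ContinuousAt (fun t : ℝ => Real.exp (-t) / t) y := by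
    intro y hy
    exact ContinuousAt.div (by fun_prop) (by fun_prop) hy.ne'
  have key : ∀ y : ℝ, x / 2 < y →
      E1 y = E1 (x / 2) - ∫ t in (x / 2)..y, Real.exp (-t) / t := by
    intro y hy
    have := intervalIntegral.integral_Ioi_sub_Ioi hInt hy.le
    unfold E1
    linarith
  have hd : HasDerivAt (fun y => E1 (x / 2) - ∫ t in (x / 2)..y, Real.exp (-t) / t)
      (-(Real.exp (-x) / x)) x := by
    refine HasDerivAt.const_sub _ ?_
    refine intervalIntegral.integral_hasDerivAt_right ?_ ?_ (hcont x hx)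
    · rw [intervalIntegrable_iff_integrableOn_Ioc_of_le (by linarith)]
      exact hInt.mono_set Set.Ioc_subset_Ioi_self
    · refine ContinuousOn.stronglyMeasurableAtFilter (s := Set.Ioi 0) isOpen_Ioi ?_ x hx
      intro y hy
      exact (hcont y hy).continuousWithinAt
  refine hd.congr_of_eventuallyEq ?_
  filter_upwards [lt_mem_nhds (show x / 2 < x by linarith)] with y hy
  exact key y hy

lemma E1_strictAnti : StrictAntiOn E1 (Set.Ioi 0) := by
  refine strictAntiOn_of_deriv_neg (convex_Ioi 0) ?_ ?_
  · intro x hx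
    exact (E1_hasDerivAt hx).continuousAt.continuousWithinAt
  · intro x hx
    rw [interior_Ioi] at hx
    have hx' : 0 < x := hx
    rw [(E1_hasDerivAt hx').deriv]
    have : 0 < Real.exp (-x) / x := by positivity
    linarith

/-- With `g(f) = C + (A·E₁(−c/f) − μ)·f − A c·((f/c) e^{c/f} + E₁(−c/f))` and `λ̃ < 0`
the unique negative solution of `A·E₁(−c/λ) = μ`, the function `g` is strictly increasing
on `(−∞, λ̃]`, tends to `−∞` as `f → −∞`, and for every `θ ≤ g(λ̃)` the equation
`g(f) = θ` has a unique solution `f ∈ (−∞, λ̃]`. -/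
theorem bellman_lhs_unique_solution (A c μ C : ℝ) (hA : 0 < A) (hc : 0 < c) (hμ : 0 < μ)
    (g : ℝ → ℝ)
    (hg : ∀ f : ℝ, g f = C + (A * E1 (-c / f) - μ) * f
        - (A * c) * ((f / c) * Real.exp (c / f) + E1 (-c / f)))
    (lam : ℝ) (hlam_neg : lam < 0) (hlam : A * E1 (-c / lam) = μ) :
    StrictMonoOn g (Set.Iic lam) ∧
    Filter.Tendsto g Filter.atBot Filter.atBot ∧
    ∀ θ : ℝ, θ ≤ g lam → ∃! f : ℝ, f ∈ Set.Iic lam ∧ g f = θ := by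
  have hder : ∀ f : ℝ, f < 0 → HasDerivAt g (A * E1 (-c / f) - μ) f := by
    intro f hf
    have hf0 : f ≠ 0 := hf.ne
    have hu : 0 < -c / f := div_pos_of_neg_of_neg (by linarith) hf
    have h1 : HasDerivAt (fun f : ℝ => -c / f) (c / f ^ 2) f := by
      have := (hasDerivAt_inv hf0).const_mul (-c)
      refine (this.congr_deriv ?_)
      field_simp
    have h2 : HasDerivAt (fun f : ℝ => E1 (-c / f)) (Real.exp (c / f) / f) f := by
      have := (E1_hasDerivAt hu).comp f h1
      refine this.congr_deriv ?_
      rw [show -(-c / f) = c / f by ring]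
      field_simp
    have h3 : HasDerivAt (fun f : ℝ => Real.exp (c / f)) (Real.exp (c / f) * (-c / f ^ 2)) f := by
      have := (hasDerivAt_inv hf0).const_mul c
      refine HasDerivAt.exp (this.congr_deriv ?_)
      field_simp
    have h4 := ((((h2.const_mul A).sub_const μ).mul (hasDerivAt_id f)).const_add C).sub
      (((((hasDerivAt_id f).div_const c).mul h3).add h2).const_mul (A * c))
    have hfun : g = _ := funext hg
    rw [hfun]
    refine h4.congr_deriv ?_
    simp only [id]
    field_simp
    ring
  have hE : ∀ f₁ f₂ : ℝ, f₁ < f₂ → f₂ < 0 → E1 (-c / f₂) < E1 (-c / f₁) := by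
    intro f₁ f₂ h h0
    have h10 : f₁ < 0 := h.trans h0
    refine E1_strictAnti (show 0 < -c / f₁ from div_pos_of_neg_of_neg (by linarith) h10)
      (show 0 < -c / f₂ from div_pos_of_neg_of_neg (by linarith) h0) ?_
    have : -c / f₂ - -c / f₁ = c * (f₂ - f₁) / (f₁ * f₂) := by
      have := h10.ne
      have := h0.ne
      field_simp
      ring
    have h3 : 0 < c * (f₂ - f₁) / (f₁ * f₂) :=
      div_pos (mul_pos hc (by linarith)) (mul_pos_of_neg_of_neg h10 h0)
    linarith
  have hcont : ContinuousOn g (Set.Iic lam) := fun f hf =>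
    (hder f (lt_of_le_of_lt hf hlam_neg)).continuousAt.continuousWithinAt
  have hmono : StrictMonoOn g (Set.Iic lam) := by
    refine strictMonoOn_of_deriv_pos (convex_Iic lam) hcont ?_
    intro f hf
    rw [interior_Iic] at hf
    have hf' : f < lam := hf
    rw [(hder f (hf'.trans hlam_neg)).deriv]
    have := mul_lt_mul_of_pos_left (hE f lam hf' hlam_neg) hA
    linarith
  have htend : Filter.Tendsto g Filter.atBot Filter.atBot := by
    have hl1 : lam - 1 < 0 := by linarith
    obtain ⟨δ, hδ⟩ : ∃ δ, δ = A * E1 (-c / (lam - 1)) - μ := ⟨_, rfl⟩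
    have hδpos : 0 < δ := by
      have := mul_lt_mul_of_pos_left (hE (lam - 1) lam (by linarith) hlam_neg) hA
      linarith
    have hd2 : ∀ f : ℝ, f < 0 →
        HasDerivAt (fun f => g f - δ * f) (A * E1 (-c / f) - μ - δ) f := by
      intro f hf
      exact ((hder f hf).sub ((hasDerivAt_id f).const_mul δ)).congr_deriv (by rw [mul_one])
    have hm : MonotoneOn (fun f => g f - δ * f) (Set.Iic (lam - 1)) := by
      refine monotoneOn_of_deriv_nonneg (convex_Iic _) ?_ ?_ ?_
      · exact fun f hf => (hd2 f (lt_of_le_of_lt hf hl1)).continuousAt.continuousWithinAt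
      · intro f hf
        rw [interior_Iic] at hf
        exact (hd2 f (lt_trans hf hl1)).differentiableAt.differentiableWithinAt
      · intro f hf
        rw [interior_Iic] at hf
        have hf' : f < lam - 1 := hf
        rw [(hd2 f (hf'.trans hl1)).deriv]
        have := mul_lt_mul_of_pos_left (hE f (lam - 1) hf' hl1) hA
        linarith
    have hlin : Filter.Tendsto (fun f : ℝ => δ * f + (g (lam - 1) - δ * (lam - 1)))
        Filter.atBot Filter.atBot :=
      Filter.tendsto_atBot_add_const_right _ _ (Filter.tendsto_id.const_mul_atBot hδpos)
    refine Filter.tendsto_atBot_mono' _ ?_ hlin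
    filter_upwards [Filter.eventually_le_atBot (lam - 1)] with f hf
    have := hm hf (Set.mem_Iic.2 le_rfl) hf
    simp only at this
    linarith
  refine ⟨hmono, htend, ?_⟩
  intro θ hθ
  obtain ⟨b, hbθ, hb⟩ := ((htend.eventually (Filter.eventually_le_atBot θ)).and
    (Filter.eventually_le_atBot lam)).exists
  obtain ⟨f, hf, hfθ⟩ := intermediate_value_Icc hb (hcont.mono Set.Icc_subset_Iic_self)
    (show θ ∈ Set.Icc (g b) (g lam) from ⟨hbθ, hθ⟩)
  refine ⟨f, ⟨hf.2, hfθ⟩, ?_⟩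
  rintro y ⟨hy, hyθ⟩
  exact hmono.injOn hy hf.2 (hyθ.trans hfθ.symm)
end

section
/- Let L, K ≥ 1, let π : {1,…,K} → {1,…,L}, and let A > 0, d ≥ 0 and c ≥ 1. Define ξ(q) = (1 + min_{1≤k≤K} q_{π(k)})/2 for q ∈ ℝ^L, and U(q) = A · ξ(q) · e^{c/ξ(q)} − d · ξ(q). Then U is convex on the cube [0,1]^L. -/
open Real

/-- Tangent line inequality for `x * exp (c / x)`. -/
lemma tangent_aux (c x y : ℝ) (hx : 0 < x) (hy : 0 < y) :
    y * Real.exp (c / y) + Real.exp (c / y) * (1 - c / y) * (x - y) ≤ x * Real.exp (c / x) := by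
  have h1 : Real.exp (c / x) = Real.exp (c / y) * Real.exp (c / x - c / y) := by
    rw [← Real.exp_add]; congr 1; ring
  have h2 := Real.add_one_le_exp (c / x - c / y)
  have h3 : x * (Real.exp (c / y) * (c / x - c / y + 1)) ≤ x * Real.exp (c / x) := by
    rw [h1]; gcongr
  refine le_trans (le_of_eq ?_) h3
  field_simp
  ring

/-- Convexity of the approximate cache cost: with
`ξ(q) = (1 + min_{1≤k≤K} q_{urp(k)})/2` and `U(q) = A·ξ(q)·e^{c/ξ(q)} − d·ξ(q)`
(`A > 0`, `d ≥ 0`, `c ≥ 1`), the function `U` is convex on the cube `[0,1]^L`. -/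
theorem convexOn_cache_cost (L K : ℕ) (hL : 1 ≤ L) (hK : 1 ≤ K)
    (hKne : (Finset.univ : Finset (Fin K)).Nonempty)
    (urp : Fin K → Fin L) (A d c : ℝ) (hA : 0 < A) (hd : 0 ≤ d) (hc : 1 ≤ c)
    (ξ : (Fin L → ℝ) → ℝ)
    (hξ : ∀ q, ξ q = (1 + Finset.univ.inf' hKne (fun k => q (urp k))) / 2)
    (U : (Fin L → ℝ) → ℝ)
    (hU : ∀ q, U q = A * ξ q * Real.exp (c / ξ q) - d * ξ q) :
    ConvexOn ℝ (Set.Icc (0 : Fin L → ℝ) 1) U := by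
  have hpos : ∀ q ∈ Set.Icc (0 : Fin L → ℝ) 1, 0 < ξ q ∧ ξ q ≤ 1 := by
    intro q hq
    have h0 : 0 ≤ Finset.univ.inf' hKne (fun k => q (urp k)) :=
      Finset.le_inf' _ _ (fun k _ => hq.1 (urp k))
    have h1 : Finset.univ.inf' hKne (fun k => q (urp k)) ≤ 1 := by
      obtain ⟨k, hk⟩ := hKne
      exact (Finset.inf'_le (fun k => q (urp k)) hk).trans (hq.2 (urp k))
    rw [hξ]
    constructor <;> linarith
  refine ⟨convex_Icc _ _, ?_⟩
  intro p hp q hq a b ha hb hab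
  have hz := hpos _ ((convex_Icc (0 : Fin L → ℝ) 1) hp hq ha hb hab)
  have hconc : a * ξ p + b * ξ q ≤ ξ (a • p + b • q) := by
    have : a * Finset.univ.inf' hKne (fun k => p (urp k))
        + b * Finset.univ.inf' hKne (fun k => q (urp k))
        ≤ Finset.univ.inf' hKne (fun k => (a • p + b • q) (urp k)) := by
      refine Finset.le_inf' _ _ (fun k hk => ?_)
      have e1 := Finset.inf'_le (fun k => p (urp k)) hk
      have e2 := Finset.inf'_le (fun k => q (urp k)) hk
      simp only [Pi.add_apply, Pi.smul_apply, smul_eq_mul]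
      gcongr
    rw [hξ, hξ, hξ]
    linarith
  obtain ⟨hz0, hz1⟩ := hz
  simp only [smul_eq_mul, hU]
  set z := ξ (a • p + b • q)
  have t1 := mul_le_mul_of_nonneg_left (tangent_aux c (ξ p) z (hpos p hp).1 hz0) ha
  have t2 := mul_le_mul_of_nonneg_left (tangent_aux c (ξ q) z (hpos q hq).1 hz0) hb
  have hm : Real.exp (c / z) * (1 - c / z) ≤ 0 := by
    have : 1 ≤ c / z := by rw [le_div_iff₀ hz0]; linarith
    exact mul_nonpos_of_nonneg_of_nonpos (Real.exp_pos _).le (by linarith)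
  set m := Real.exp (c / z) * (1 - c / z)
  have hs : 0 ≤ m * (a * ξ p + b * ξ q - z) :=
    mul_nonneg_of_nonpos_of_nonpos hm (by linarith)
  have hb' : b = 1 - a := by linarith
  have key : z * Real.exp (c / z)
      ≤ a * (ξ p * Real.exp (c / ξ p)) + b * (ξ q * Real.exp (c / ξ q)) := by
    have e : a * (z * Real.exp (c / z) + m * (ξ p - z)) + b * (z * Real.exp (c / z) + m * (ξ q - z))
        = z * Real.exp (c / z) + m * (a * ξ p + b * ξ q - z) := by
      rw [hb']; ring
    linarith
  have k1 := mul_le_mul_of_nonneg_left key hA.le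
  have k2 := mul_le_mul_of_nonneg_left hconc hd
  linarith
end
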